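/- arXiv:1503.05761 — 5 statements merged into one kernel-verified Lean document; each statement's English description precedes it below -/
import Mathlib

section
/- The family of polynomials (X_i)_{0 ≤ i < 2^m} is a basis of the F-vector space of polynomials in F[X] of degree less than 2^m: the X_i are linearly independent over F and every polynomial of degree < 2^m is an F-linear combination of X_0, …, X_{2^m−1}. -/
open Polynomial Finset

/-- The GF(2)-linear span of `v 0, …, v (k-1)` as a `Finset`. -/
noncomputable def Vset {F : Type*} [Field F] (v : ℕ → F) (k : ℕ) : Finset F :=
  letI := Classical.decEq F
  (Finset.univ : Finset (Fin k → Bool)).image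
    (fun ε => ∑ j : Fin k, if ε j then v j else 0)

/-- The subspace polynomial `s_k(X) = ∏_{a ∈ V_k} (X - a)`. -/
noncomputable def sPoly {F : Type*} [Field F] (v : ℕ → F) (k : ℕ) : Polynomial F :=
  ∏ a ∈ Vset v k, (X - C a)

/-- The basis polynomial `X_i(X) = ∏_{j<m} s_j(X)^{i_j}`, where `i_j` is the
`j`-th binary digit of `i`. -/
noncomputable def XPoly {F : Type*} [Field F] (v : ℕ → F) (m i : ℕ) : Polynomial F :=
  ∏ j ∈ Finset.range m, (sPoly v j) ^ (Nat.testBit i j).toNat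

/-- The normalizing constant `p_i = ∏_{j<m} (s_j(v_j))^{i_j}`. -/
noncomputable def pCoef {F : Type*} [Field F] (v : ℕ → F) (m i : ℕ) : F :=
  ∏ j ∈ Finset.range m, ((sPoly v j).eval (v j)) ^ (Nat.testBit i j).toNat

/-- `v 0, …, v (m-1)` are linearly independent over the prime field GF(2). -/
def LinIndepGF2 {F : Type*} [Field F] (v : ℕ → F) (m : ℕ) : Prop :=
  ∀ ε : ℕ → Bool, (∑ j ∈ Finset.range m, if ε j then v j else 0) = 0 →
    ∀ j < m, ε j = false

/-!
In characteristic two the difference of two subset sums of `v 0, …, v (k - 1)` is again a subset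
sum, so linear independence makes the `2 ^ k` subset sums distinct and `s_k` is monic of degree
`2 ^ k`. The degree of `X_i` is therefore `∑ i_j 2 ^ j = i`, and monic polynomials of degrees
`0, …, n - 1` form a basis of the polynomials of degree less than `n`. Only `s_0, …, s_{m-1}` occur
in the `X_i`, and they are built from `v 0, …, v (m - 2)`.
-/

section DegreeSequence

variable {R : Type*} [Ring R] {n : ℕ} {p : Fin n → R[X]}

/-- Extension by powers of `X` of a family of `n` polynomials of degrees `0, …, n - 1` to a
polynomial sequence, which makes the theory of polynomial sequences available for the family. -/
noncomputable def sequenceExtension [Nontrivial R] (p : Fin n → R[X])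
    (hp : ∀ i, (p i).degree = (i : ℕ)) : Polynomial.Sequence R where
  elems' k := if hk : k < n then p ⟨k, hk⟩ else X ^ k
  degree_eq' k := by
    split_ifs with hk
    · exact hp ⟨k, hk⟩
    · exact degree_X_pow k

theorem sequenceExtension_comp_val [Nontrivial R] (hp : ∀ i, (p i).degree = (i : ℕ)) :
    sequenceExtension p hp ∘ Fin.val = p :=
  funext fun i => dif_pos i.isLt

theorem linearIndependent_of_degree_eq [IsDomain R] (hp : ∀ i, (p i).degree = (i : ℕ)) :
    LinearIndependent R p := by
  rw [← sequenceExtension_comp_val hp]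
  exact (sequenceExtension p hp).linearIndependent.comp _ Fin.val_injective

theorem span_range_eq_degreeLT (hp : ∀ i, (p i).degree = (i : ℕ))
    (hlead : ∀ i, IsUnit (p i).leadingCoeff) :
    Submodule.span R (Set.range p) = degreeLT R n := by
  nontriviality R
  have hlead' : ∀ k < n, IsUnit (sequenceExtension p hp k).leadingCoeff := fun k hk => by
    have hpk : sequenceExtension p hp k = p ⟨k, hk⟩ :=
      congrFun (sequenceExtension_comp_val hp) ⟨k, hk⟩
    exact hpk ▸ hlead ⟨k, hk⟩
  rw [← (sequenceExtension p hp).span_degreeLT hlead', ← Fin.range_val, ← Set.range_comp,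
    sequenceExtension_comp_val]

end DegreeSequence

theorem sum_testBit_mul_two_pow (m i : ℕ) :
    ∑ j ∈ range m, (i.testBit j).toNat * 2 ^ j = i % 2 ^ m := by
  induction m with
  | zero => rw [sum_range_zero, pow_zero, Nat.mod_one]
  | succ m ih => rw [sum_range_succ, ih, Nat.mod_pow_succ, Nat.toNat_testBit, mul_comm]

theorem sum_ite_xor {ι R : Type*} [Semiring R] [CharP R 2] (s : Finset ι) (a b : ι → Bool)
    (f : ι → R) :
    (∑ j ∈ s, if a j ^^ b j then f j else 0) =
      (∑ j ∈ s, if a j then f j else 0) + ∑ j ∈ s, if b j then f j else 0 := by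
  rw [← sum_add_distrib]
  refine sum_congr rfl fun j _ => ?_
  cases a j <;> cases b j <;> simp [CharTwo.add_self_eq_zero]

section SubspacePolynomial

variable {F : Type*} [Field F] {v : ℕ → F} {m k : ℕ}

theorem LinIndepGF2.mono (hv : LinIndepGF2 v m) (hkm : k ≤ m) : LinIndepGF2 v k := by
  intro ε hε j hj
  have hsum : (∑ i ∈ range m, if decide (i < k) && ε i then v i else 0) = 0 := by
    rw [← sum_subset (range_mono hkm) fun i _ hi => by simp [mem_range.not.mp hi]]
    refine (sum_congr rfl fun i hi => ?_).trans hε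
    simp only [mem_range.mp hi, decide_true, Bool.true_and]
  simpa [hj] using hv _ hsum j (hj.trans_le hkm)

theorem LinIndepGF2.injective_sum [CharP F 2] (hv : LinIndepGF2 v k) :
    Function.Injective fun ε : Fin k → Bool => ∑ j, if ε j then v j else 0 := by
  intro a b hab
  have hxor : (∑ j : Fin k, if a j ^^ b j then v j else 0) = 0 := by
    rw [sum_ite_xor, CharTwo.add_eq_zero]
    exact hab
  let ε : ℕ → Bool := fun j => if hj : j < k then a ⟨j, hj⟩ ^^ b ⟨j, hj⟩ else false
  have hε (j : Fin k) : ε j = (a j ^^ b j) := dif_pos j.isLt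
  have hsum : (∑ j ∈ range k, if ε j then v j else 0) = 0 := by
    simpa only [sum_range, hε] using hxor
  funext j
  have hj : (a j ^^ b j) = false := (hε j).symm.trans (hv ε hsum j j.isLt)
  simpa using hj

theorem card_Vset [CharP F 2] (hv : LinIndepGF2 v k) : #(Vset v k) = 2 ^ k := by
  classical
  rw [Vset, card_image_of_injective _ hv.injective_sum]
  simp

theorem monic_sPoly (v : ℕ → F) (k : ℕ) : (sPoly v k).Monic :=
  monic_prod_X_sub_C id (Vset v k)

theorem natDegree_sPoly (v : ℕ → F) (k : ℕ) : (sPoly v k).natDegree = #(Vset v k) :=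
  natDegree_finsetProd_X_sub_C_eq_card (Vset v k) id

theorem monic_XPoly (v : ℕ → F) (m i : ℕ) : (XPoly v m i).Monic :=
  monic_prod_of_monic _ _ fun j _ => (monic_sPoly v j).pow _

theorem natDegree_XPoly (hV : ∀ j < m, #(Vset v j) = 2 ^ j) (i : ℕ) :
    (XPoly v m i).natDegree = i % 2 ^ m :=
  calc
    (XPoly v m i).natDegree = ∑ j ∈ range m, (i.testBit j).toNat * #(Vset v j) := by
      rw [XPoly, natDegree_prod_of_monic _ _ fun j _ => (monic_sPoly v j).pow _]
      simp only [(monic_sPoly v _).natDegree_pow, natDegree_sPoly]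
    _ = ∑ j ∈ range m, (i.testBit j).toNat * 2 ^ j :=
      sum_congr rfl fun j hj => by rw [hV j (mem_range.mp hj)]
    _ = i % 2 ^ m := sum_testBit_mul_two_pow m i

theorem degree_XPoly (hV : ∀ j < m, #(Vset v j) = 2 ^ j) (i : Fin (2 ^ m)) :
    (XPoly v m i).degree = (i : ℕ) := by
  rw [degree_eq_natDegree (monic_XPoly v m i).ne_zero, natDegree_XPoly hV,
    Nat.mod_eq_of_lt i.isLt]

end SubspacePolynomial

theorem XPoly_basis_general {F : Type*} [Field F] [CharP F 2] {m : ℕ} {v : ℕ → F}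
    (hv : LinIndepGF2 v (m - 1)) :
    LinearIndependent F (fun i : Fin (2 ^ m) => XPoly v m (i : ℕ)) ∧
    Submodule.span F (Set.range fun i : Fin (2 ^ m) => XPoly v m (i : ℕ)) =
      degreeLT F (2 ^ m) := by
  have hV : ∀ j < m, #(Vset v j) = 2 ^ j := fun j hj =>
    card_Vset (hv.mono (Nat.le_sub_one_of_lt hj))
  have hlead (i : Fin (2 ^ m)) : IsUnit (XPoly v m i).leadingCoeff :=
    (monic_XPoly v m i).leadingCoeff ▸ isUnit_one
  exact ⟨linearIndependent_of_degree_eq (degree_XPoly hV),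
    span_range_eq_degreeLT (degree_XPoly hV) hlead⟩

/-- the family `(X_i)_{i < 2^m}` is a basis of the space of
polynomials of degree `< 2^m`: linearly independent over `F`, and every
polynomial of degree `< 2^m` lies in its span. -/
theorem XPoly_basis {F : Type*} [Field F] [Fintype F] (m : ℕ) (hm : 1 ≤ m)
    (hcard : Fintype.card F = 2 ^ m) (v : ℕ → F) (hv : LinIndepGF2 v m) :
    LinearIndependent F (fun i : Fin (2 ^ m) => XPoly v m (i : ℕ)) ∧
    ∀ f : Polynomial F, f.degree < ((2 ^ m : ℕ) : WithBot ℕ) →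
      f ∈ Submodule.span F (Set.range fun i : Fin (2 ^ m) => XPoly v m (i : ℕ)) := by
  have : CharP F 2 := charP_of_card_eq_prime_pow hcard
  have ⟨hindep, hspan⟩ := XPoly_basis_general (hv.mono (Nat.sub_le m 1))
  exact ⟨hindep, fun f hf => hspan.ge (mem_degreeLT.mpr hf)⟩
end

section
/- Let 1 ≤ k ≤ m and let d_0, …, d_{2^k−1} ∈ F. Define D(X) = Σ_{i=0}^{2^k−1} (d_i / p_i) · X_i(X). Then for every γ ∈ F and every a ∈ V_{k−1}: D(a + γ) = Σ_{i=0}^{2^{k−1}−1} ( d_i + (s_{k−1}(γ) / s_{k−1}(v_{k−1})) · d_{i+2^{k−1}} ) · (1/p_i) · X_i(a + γ). (Here s_{k−1}(v_{k−1}) ≠ 0 because v_{k−1} ∉ V_{k−1}.) -/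
open Polynomial Finset

/-!
Adding `2 ^ n` to an index `i < 2 ^ n` sets its `n`-th binary digit, so it multiplies both `X_i` and
`p_i` by their `n`-th factor, and `D` is a combination of the `X_i` with `i < 2 ^ n` whose
coefficients are affine in `s_n`. In characteristic two `V_n` is an additive group, so `s_n` is
invariant under translation by `a ∈ V_n`: at `a + γ` those coefficients take their values at `γ`.
-/

section Subspace

variable {F : Type*} [Field F] {v : ℕ → F} {k m n : ℕ} {a b : F}

lemma mem_Vset : a ∈ Vset v k ↔ ∃ ε : Fin k → Bool, ∑ j : Fin k, (if ε j then v j else 0) = a := by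
  classical
  simp [Vset]

lemma eval_sPoly (v : ℕ → F) (k : ℕ) (x : F) :
    (sPoly v k).eval x = ∏ b ∈ Vset v k, (x - b) := by
  simp [sPoly, eval_prod]

variable [CharP F 2]

lemma add_mem_Vset (ha : a ∈ Vset v k) (hb : b ∈ Vset v k) : a + b ∈ Vset v k := by
  obtain ⟨ε, rfl⟩ := mem_Vset.1 ha
  obtain ⟨δ, rfl⟩ := mem_Vset.1 hb
  refine mem_Vset.2 ⟨fun j ↦ xor (ε j) (δ j), ?_⟩
  rw [← sum_add_distrib]
  refine sum_congr rfl fun j _ ↦ ?_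
  cases hε : ε j <;> cases hδ : δ j <;> simp [hε, hδ, CharTwo.add_self_eq_zero]

lemma add_mem_Vset_cancel_left (ha : a ∈ Vset v k) : a + b ∈ Vset v k ↔ b ∈ Vset v k :=
  ⟨fun h ↦ by simpa [CharTwo.add_cancel_left] using add_mem_Vset ha h, add_mem_Vset ha⟩

lemma eval_add_sPoly_of_mem (ha : a ∈ Vset v k) (x : F) :
    (sPoly v k).eval (a + x) = (sPoly v k).eval x := by
  rw [eval_sPoly, eval_sPoly]
  refine prod_equiv (Equiv.addLeft a) (fun b ↦ (add_mem_Vset_cancel_left ha).symm) fun b _ ↦ ?_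
  rw [Equiv.coe_addLeft, CharTwo.sub_eq_add, CharTwo.sub_eq_add]
  ring

lemma LinIndepGF2.notMem_Vset (hv : LinIndepGF2 v m) (hn : n < m) : v n ∉ Vset v n := by
  intro hmem
  obtain ⟨ε, hε⟩ := mem_Vset.1 hmem
  let δ : ℕ → Bool := fun j ↦ if h : j < n then ε ⟨j, h⟩ else decide (j = n)
  have hrel : ∑ j ∈ range m, (if δ j then v j else 0) = 0 := by
    have htail : ∀ j ∈ range m, j ∉ range (n + 1) → (if δ j then v j else 0) = 0 := by
      intro j _ hj
      grind
    rw [← sum_subset (range_subset_range.2 hn) htail, sum_range_succ, sum_range]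
    simp [δ, hε, CharTwo.add_self_eq_zero]
  simpa [δ] using hv δ hrel n hn

lemma LinIndepGF2.eval_sPoly_ne_zero (hv : LinIndepGF2 v m) (hn : n < m) :
    (sPoly v n).eval (v n) ≠ 0 := by
  rw [eval_sPoly, prod_ne_zero_iff]
  intro b hb hzero
  exact hv.notMem_Vset hn (sub_eq_zero.1 hzero ▸ hb)

lemma LinIndepGF2.pCoef_ne_zero (hv : LinIndepGF2 v m) (i : ℕ) : pCoef v m i ≠ 0 :=
  prod_ne_zero_iff.2 fun _ hj ↦ pow_ne_zero _ (hv.eval_sPoly_ne_zero (mem_range.1 hj))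

end Subspace

section BinaryDigits

variable {m n i : ℕ}

lemma testBit_add_two_pow_of_lt (hi : i < 2 ^ n) (j : ℕ) :
    (i + 2 ^ n).testBit j = (decide (n = j) || i.testBit j) := by
  have hor : i + 2 ^ n = 2 ^ n ||| i := by
    simpa [add_comm] using Nat.two_pow_add_eq_or_of_lt hi 1
  rw [hor, Nat.testBit_or, Nat.testBit_two_pow]

lemma prod_pow_testBit_add_two_pow {M : Type*} [CommMonoid M] (f : ℕ → M) (hn : n < m)
    (hi : i < 2 ^ n) :
    ∏ j ∈ range m, f j ^ ((i + 2 ^ n).testBit j).toNat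
      = f n * ∏ j ∈ range m, f j ^ (i.testBit j).toNat := by
  have hfactor (j : ℕ) : f j ^ ((i + 2 ^ n).testBit j).toNat
      = (if n = j then f j else 1) * f j ^ (i.testBit j).toNat := by
    rw [testBit_add_two_pow_of_lt hi]
    obtain rfl | hj := eq_or_ne n j
    · simp [Nat.testBit_lt_two_pow hi]
    · simp [hj]
  simp only [hfactor, prod_mul_distrib, prod_ite_eq, mem_range, hn, if_true]

variable {F : Type*} [Field F]

lemma XPoly_add_two_pow (v : ℕ → F) (hn : n < m) (hi : i < 2 ^ n) :
    XPoly v m (i + 2 ^ n) = sPoly v n * XPoly v m i :=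
  prod_pow_testBit_add_two_pow (sPoly v) hn hi

lemma pCoef_add_two_pow (v : ℕ → F) (hn : n < m) (hi : i < 2 ^ n) :
    pCoef v m (i + 2 ^ n) = (sPoly v n).eval (v n) * pCoef v m i :=
  prod_pow_testBit_add_two_pow (fun j ↦ (sPoly v j).eval (v j)) hn hi

lemma sum_C_mul_XPoly_two_pow_succ (v c : ℕ → F) (hn : n < m) :
    ∑ i ∈ range (2 ^ (n + 1)), C (c i) * XPoly v m i
      = ∑ i ∈ range (2 ^ n), (C (c i) + sPoly v n * C (c (i + 2 ^ n))) * XPoly v m i := by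
  rw [pow_succ, mul_two, sum_range_add, ← sum_add_distrib]
  refine sum_congr rfl fun i hi ↦ ?_
  rw [add_comm (2 ^ n) i, XPoly_add_two_pow v hn (mem_range.1 hi)]
  ring

end BinaryDigits

section Butterfly

variable {F : Type*} [Field F] [CharP F 2] {m n : ℕ} {v : ℕ → F} {a : F}

lemma eval_add_sum_C_mul_XPoly (c : ℕ → F) (hn : n < m) (ha : a ∈ Vset v n) (γ : F) :
    (∑ i ∈ range (2 ^ (n + 1)), C (c i) * XPoly v m i).eval (a + γ)
      = ∑ i ∈ range (2 ^ n),
          (c i + (sPoly v n).eval γ * c (i + 2 ^ n)) * (XPoly v m i).eval (a + γ) := by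
  simp only [sum_C_mul_XPoly_two_pow_succ v c hn, eval_finsetSum, eval_mul, eval_add, eval_C,
    eval_add_sPoly_of_mem ha]

theorem fft_butterfly_general (hv : LinIndepGF2 v m) (hn : n < m) (d : ℕ → F)
    (ha : a ∈ Vset v n) (γ : F) :
    (∑ i ∈ range (2 ^ (n + 1)), C (d i / pCoef v m i) * XPoly v m i).eval (a + γ)
      = ∑ i ∈ range (2 ^ n),
          (d i + (sPoly v n).eval γ / (sPoly v n).eval (v n) * d (i + 2 ^ n))
            * (1 / pCoef v m i) * (XPoly v m i).eval (a + γ) := by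
  rw [eval_add_sum_C_mul_XPoly _ hn ha]
  refine sum_congr rfl fun i hi ↦ ?_
  have hp : pCoef v m i ≠ 0 := hv.pCoef_ne_zero i
  have hcancel : d (i + 2 ^ n) / pCoef v m (i + 2 ^ n) * pCoef v m i
      = d (i + 2 ^ n) / (sPoly v n).eval (v n) := by
    rw [pCoef_add_two_pow v hn (mem_range.1 hi), div_mul_eq_mul_div, mul_div_mul_right _ _ hp]
  congr 1
  rw [mul_one_div, eq_div_iff hp, add_mul, div_mul_cancel₀ _ hp, mul_assoc, hcancel]
  ring

end Butterfly

/-- the butterfly identity underlying the FFT: if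
`D = Σ_{i < 2^k} (d_i / p_i) · X_i`, then for every `γ ∈ F` and `a ∈ V_(k-1)`,
`D(a+γ) = Σ_{i < 2^(k-1)} (d_i + (s_(k-1)(γ)/s_(k-1)(v_(k-1))) d_(i+2^(k-1))) (1/p_i) X_i(a+γ)`. -/
theorem fft_butterfly {F : Type*} [Field F] [Fintype F] (m : ℕ) (hm : 1 ≤ m)
    (hcard : Fintype.card F = 2 ^ m) (v : ℕ → F) (hv : LinIndepGF2 v m)
    (k : ℕ) (hk1 : 1 ≤ k) (hkm : k ≤ m) (d : ℕ → F)
    (D : Polynomial F)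
    (hD : D = ∑ i ∈ Finset.range (2 ^ k), C (d i / pCoef v m i) * XPoly v m i)
    (γ : F) (a : F) (ha : a ∈ Vset v (k - 1)) :
    D.eval (a + γ)
      = ∑ i ∈ Finset.range (2 ^ (k - 1)),
          (d i + (sPoly v (k - 1)).eval γ / (sPoly v (k - 1)).eval (v (k - 1))
              * d (i + 2 ^ (k - 1)))
            * (1 / pCoef v m i) * (XPoly v m i).eval (a + γ) := by
  have : CharP F 2 := charP_of_card_eq_prime_pow hcard
  obtain ⟨n, rfl⟩ := Nat.exists_eq_add_of_le' hk1
  exact hD ▸ fft_butterfly_general hv hkm d ha γ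
end

section
/- Let a, b ∈ F[X] with deg a > deg b ≥ 0 (in particular b ≠ 0), let Dℓ = ⌈log₂(deg a + 1)⌉ and assume Dℓ + 1 ≤ m. Set D_a = Dℓ + 1 and y = 2^{Dℓ} − deg b − 1, and let Q, r ∈ F[X] satisfy a = Q·b + r with deg r < deg b. Put A = a·X_y, B = b·X_y. Suppose Λ, H ∈ F[X] satisfy deg Λ = 2^{Dℓ} − 1, deg H ≤ 2^{Dℓ}, and Λ · s_1 · B = s_{D_a} + H. Then Q is the quotient of A·Λ·s_1 on division by the monic polynomial s_{D_a}: A·Λ·s_1 = Q·s_{D_a} + ρ for some ρ ∈ F[X] with deg ρ < 2^{D_a}. -/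
open Polynomial Finset

/-!
If `b * M = S + H` with `H` small, then `M` is an approximate inverse of `b` relative to `S`.
Multiplying `a = Q * b + r` by `M` gives `a * M = Q * S + (Q * H + r * M)`. The first error term is
small because `deg Q ≤ deg a`, the second because `deg (r * M) < deg (b * M) = deg (S + H)`.
Here `S = s_{D_a}` and `M = X_y Λ s_1`.
-/

section Semiring

variable {R : Type*} [Semiring R] [NoZeroDivisors R] {a b Q r M S H : R[X]}

theorem degree_mul_lt_degree_mul_of_ne_zero (hM : M ≠ 0) (hr : r.degree < b.degree) :
    (r * M).degree < (b * M).degree := by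
  simpa only [degree_mul] using WithBot.add_lt_add_right (degree_ne_bot.mpr hM) hr

theorem degree_quotient_le_degree (hqr : a = Q * b + r) (hr : r.degree < b.degree) :
    Q.degree ≤ a.degree := by
  obtain rfl | hQ := eq_or_ne Q 0
  · simp
  have hb : b ≠ 0 := ne_zero_of_degree_gt hr
  have hrQb : r.degree < (Q * b).degree := by
    rw [degree_mul]
    exact hr.trans_le (le_add_of_nonneg_left (zero_le_degree_iff.mpr hQ))
  calc
    Q.degree ≤ (Q * b).degree := degree_le_mul_left Q hb
    _ = a.degree := by rw [hqr, degree_add_eq_left_of_degree_lt hrQb]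

theorem exists_mul_eq_quotient_mul_add_of_mul_eq_add {d : WithBot ℕ}
    (hqr : a = Q * b + r) (hr : r.degree < b.degree) (hbM : b * M = S + H)
    (hQH : (Q * H).degree < d) (hSH : (S + H).degree ≤ d) :
    ∃ ρ : R[X], a * M = Q * S + ρ ∧ ρ.degree < d := by
  have hrM : (r * M).degree < d := by
    obtain rfl | hM := eq_or_ne M 0
    · simpa using bot_le.trans_lt hQH
    · exact (degree_mul_lt_degree_mul_of_ne_zero hM hr).trans_le (hbM ▸ hSH)
  refine ⟨Q * H + r * M, ?_, (degree_add_le _ _).trans_lt (max_lt hQH hrM)⟩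
  calc
    a * M = Q * (b * M) + r * M := by rw [hqr, add_mul, mul_assoc]
    _ = Q * S + (Q * H + r * M) := by rw [hbM, mul_add, add_assoc]

end Semiring

section SubspacePolynomial

variable {F : Type*} [Field F]

theorem card_Vset_le (v : ℕ → F) (k : ℕ) : (Vset v k).card ≤ 2 ^ k := by
  classical
  exact card_image_le.trans (by simp)

theorem degree_sPoly_le (v : ℕ → F) (k : ℕ) : (sPoly v k).degree ≤ ((2 ^ k : ℕ) : WithBot ℕ) := by
  refine degree_le_of_natDegree_le ?_
  rw [sPoly, natDegree_finsetProd_X_sub_C_eq_card]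
  exact card_Vset_le v k

theorem division_quotient_general (v : ℕ → F) {a b Q r M H : F[X]} {n : ℕ}
    (ha : a.degree < ((2 ^ n : ℕ) : WithBot ℕ)) (hqr : a = Q * b + r) (hr : r.degree < b.degree)
    (hH : H.degree ≤ ((2 ^ n : ℕ) : WithBot ℕ)) (hbM : b * M = sPoly v (n + 1) + H) :
    ∃ ρ : F[X], a * M = Q * sPoly v (n + 1) + ρ ∧
      ρ.degree < ((2 ^ (n + 1) : ℕ) : WithBot ℕ) := by
  have hQH : (Q * H).degree < ((2 ^ (n + 1) : ℕ) : WithBot ℕ) :=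
    calc
      (Q * H).degree ≤ Q.degree + ((2 ^ n : ℕ) : WithBot ℕ) := degree_mul_le_of_le le_rfl hH
      _ < ((2 ^ n : ℕ) : WithBot ℕ) + ((2 ^ n : ℕ) : WithBot ℕ) :=
        WithBot.add_lt_add_right (WithBot.natCast_ne_bot _)
          ((degree_quotient_le_degree hqr hr).trans_lt ha)
      _ = ((2 ^ (n + 1) : ℕ) : WithBot ℕ) := by rw [← Nat.cast_add, ← two_mul, ← pow_succ']
  have hSH : (sPoly v (n + 1) + H).degree ≤ ((2 ^ (n + 1) : ℕ) : WithBot ℕ) :=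
    degree_add_le_of_degree_le (degree_sPoly_le v (n + 1)) (hH.trans (by gcongr <;> simp))
  exact exists_mul_eq_quotient_mul_add_of_mul_eq_add hqr hr hbM hQH hSH

end SubspacePolynomial

/-- the quotient extraction in the fast division algorithm:
`Q` is the quotient of `A·Λ·s_1` on division by the monic polynomial `s_(D_a)`. -/
theorem division_quotient {F : Type*} [Field F] [Fintype F] (m : ℕ) (hm : 1 ≤ m)
    (hcard : Fintype.card F = 2 ^ m) (v : ℕ → F) (hv : LinIndepGF2 v m)
    (a b : Polynomial F) (hb : 0 ≤ b.degree) (hab : b.degree < a.degree)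
    (Dℓ : ℕ) (hD : Dℓ = Nat.clog 2 (a.natDegree + 1)) (hDm : Dℓ + 1 ≤ m)
    (y : ℕ) (hy : y = 2 ^ Dℓ - b.natDegree - 1)
    (Q r : Polynomial F) (hqr : a = Q * b + r) (hr : r.degree < b.degree)
    (Λ H : Polynomial F)
    (hΛ : Λ.degree = ((2 ^ Dℓ - 1 : ℕ) : WithBot ℕ))
    (hH : H.degree ≤ ((2 ^ Dℓ : ℕ) : WithBot ℕ))
    (heq : Λ * sPoly v 1 * (b * XPoly v m y) = sPoly v (Dℓ + 1) + H) :
    ∃ ρ : Polynomial F,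
      (a * XPoly v m y) * Λ * sPoly v 1 = Q * sPoly v (Dℓ + 1) + ρ ∧
      ρ.degree < ((2 ^ (Dℓ + 1) : ℕ) : WithBot ℕ) := by
  have ha : a.degree < ((2 ^ Dℓ : ℕ) : WithBot ℕ) :=
    degree_le_natDegree.trans_lt (Nat.cast_lt.mpr (hD ▸ Nat.le_pow_clog one_lt_two _))
  simpa only [mul_assoc] using division_quotient_general v (M := XPoly v m y * Λ * sPoly v 1)
    ha hqr hr hH (by rw [← heq]; ring)
end

section
/- (Key equation) Let K be a finite field, E ⊆ K a subset, and u, r ∈ K[X] polynomials with u(a) = r(a) for every a ∈ K \ E. Let λ(X) = ∏_{a ∈ E} (X − a) be the error-locator polynomial. Then the polynomial ∏_{a ∈ K} (X − a) divides (u − r) · λ in K[X]. -/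
open Polynomial Finset

theorem prod_X_sub_C_dvd_iff_forall_isRoot {R : Type*} [CommRing R] [IsDomain R]
    {s : Finset R} {p : R[X]} :
    (∏ a ∈ s, (X - C a)) ∣ p ↔ ∀ a ∈ s, p.IsRoot a := by
  rcases eq_or_ne p 0 with rfl | hp
  · simp
  calc (∏ a ∈ s, (X - C a)) ∣ p
      ↔ s.val ≤ p.roots := Multiset.prod_X_sub_C_dvd_iff_le_roots hp s.val
    _ ↔ s.val ⊆ p.roots := Multiset.le_iff_subset s.nodup
    _ ↔ ∀ a ∈ s, p.IsRoot a := forall₂_congr fun _ _ ↦ mem_roots hp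

theorem key_equation_general {R : Type*} [CommRing R] [IsDomain R] (s E : Finset R) (u r : R[X])
    (h : ∀ a ∈ s, a ∉ E → u.eval a = r.eval a) :
    (∏ a ∈ s, (X - C a)) ∣ (u - r) * ∏ a ∈ E, (X - C a) := by
  refine prod_X_sub_C_dvd_iff_forall_isRoot.mpr fun a ha ↦ root_mul.mpr ?_
  by_cases haE : a ∈ E
  · exact .inr (prod_X_sub_C_dvd_iff_forall_isRoot.mp dvd_rfl a haE)
  · left
    rw [IsRoot.def, eval_sub, h a ha haE, sub_self]

/-- key equation: for a finite field `K`, a subset `E ⊆ K`, and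
polynomials `u, r` agreeing on `K \ E`, the polynomial `∏_{a ∈ K} (X - a)`
divides `(u - r)·λ` where `λ = ∏_{a ∈ E} (X - a)`. -/
theorem key_equation {K : Type*} [Field K] [Fintype K] (E : Finset K)
    (u r : Polynomial K) (h : ∀ a : K, a ∉ E → u.eval a = r.eval a) :
    (∏ a : K, (X - C a)) ∣ (u - r) * ∏ a ∈ E, (X - C a) :=
  key_equation_general univ E u r fun a _ ↦ h a
end

section
/- (Error-value formula) Let K be a finite field of characteristic 2, E ⊆ K a subset, and λ(X) = ∏_{a ∈ E} (X − a). Suppose u, r, q ∈ K[X] satisfy (u + r) · λ = q · ∏_{a ∈ K} (X − a). Then for every a ∈ E, the formal derivative λ′ satisfies λ′(a) ≠ 0 and (u(a) + r(a)) · λ′(a) = q(a); equivalently, u(a) + r(a) = q(a) / λ′(a). -/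
open Polynomial Finset

/-!
If `p * f = q * g` and `a` is a common root of `f` and `g`, then differentiating both sides and
evaluating at `a` kills the terms containing `f a` and `g a`, leaving `p a * f' a = q a * g' a`.
Over a finite field `K` of order `n`, the polynomial `g = ∏ a : K, (X - a) = X ^ n - X` has
derivative `-1`, which is `1` in characteristic two.
-/

theorem eval_mul_eval_derivative_eq_of_mul_eq_mul {R : Type*} [CommSemiring R]
    {p f q g : R[X]} {a : R} (h : p * f = q * g) (hf : f.eval a = 0) (hg : g.eval a = 0) :
    p.eval a * (derivative f).eval a = q.eval a * (derivative g).eval a := by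
  have h_deriv : (derivative (p * f)).eval a = (derivative (q * g)).eval a := by rw [h]
  simpa only [derivative_mul, eval_add, eval_mul, hf, hg, mul_zero, zero_add] using h_deriv

theorem eval_prod_X_sub_C_eq_zero {R : Type*} [CommRing R] {s : Finset R} {a : R} (ha : a ∈ s) :
    (∏ b ∈ s, (X - C b)).eval a = 0 :=
  Lagrange.eval_nodal_at_node (v := id) ha

theorem eval_derivative_prod_X_sub_C_ne_zero {R : Type*} [CommRing R] [IsDomain R]
    {s : Finset R} {a : R} (ha : a ∈ s) :
    (derivative (∏ b ∈ s, (X - C b))).eval a ≠ 0 := by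
  classical
  have h_eval : (derivative (∏ b ∈ s, (X - C b))).eval a = (∏ b ∈ s.erase a, (X - C b)).eval a :=
    Lagrange.eval_nodal_derivative_eval_node_eq (v := id) ha
  rw [h_eval]
  exact Lagrange.eval_nodal_not_at_node (v := id) fun b hb => (ne_of_mem_erase hb).symm

section FiniteField

variable (K : Type*) [Field K] [Fintype K]

theorem prod_univ_X_sub_C_eq_X_pow_card_sub_X :
    ∏ a : K, (X - C a) = X ^ Fintype.card K - X := by
  have h_monic : (X ^ Fintype.card K - X : K[X]).Monic :=
    monic_X_pow_sub (by rw [degree_X]; exact_mod_cast Fintype.one_lt_card)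
  have h_card : (X ^ Fintype.card K - X : K[X]).roots.card =
      (X ^ Fintype.card K - X : K[X]).natDegree := by
    rw [FiniteField.roots_X_pow_card_sub_X,
      FiniteField.X_pow_card_sub_X_natDegree_eq K Fintype.one_lt_card, card_val, card_univ]
  simpa only [FiniteField.roots_X_pow_card_sub_X, prod_map_val] using
    prod_multiset_X_sub_C_of_monic_of_roots_card_eq h_monic h_card

theorem derivative_prod_univ_X_sub_C : derivative (∏ a : K, (X - C a)) = -1 := by
  rw [prod_univ_X_sub_C_eq_X_pow_card_sub_X, derivative_sub, derivative_X_pow, derivative_X,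
    FiniteField.cast_card_eq_zero, C_0, zero_mul, zero_sub]

end FiniteField

theorem error_value_formula_general {K : Type*} [Field K] [Fintype K] (E : Finset K) (p q : K[X])
    (h : p * ∏ a ∈ E, (X - C a) = q * ∏ a : K, (X - C a)) :
    ∀ a ∈ E,
      (derivative (∏ b ∈ E, (X - C b))).eval a ≠ 0 ∧
      p.eval a * (derivative (∏ b ∈ E, (X - C b))).eval a = -q.eval a ∧
      p.eval a = -q.eval a / (derivative (∏ b ∈ E, (X - C b))).eval a := by
  intro a ha
  have h_ne := eval_derivative_prod_X_sub_C_ne_zero ha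
  have h_mul : p.eval a * (derivative (∏ b ∈ E, (X - C b))).eval a = -q.eval a := by
    rw [eval_mul_eval_derivative_eq_of_mul_eq_mul h (eval_prod_X_sub_C_eq_zero ha)
        (eval_prod_X_sub_C_eq_zero (mem_univ a)),
      derivative_prod_univ_X_sub_C, eval_neg, eval_one, mul_neg_one]
  exact ⟨h_ne, h_mul, (eq_div_iff h_ne).2 h_mul⟩

/-- error-value formula: in characteristic 2, if
`(u + r)·λ = q·∏_{a ∈ K}(X - a)` with `λ = ∏_{a ∈ E}(X - a)`, then for `a ∈ E`
we have `λ'(a) ≠ 0`, `(u(a)+r(a))·λ'(a) = q(a)`, and `u(a)+r(a) = q(a)/λ'(a)`. -/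
theorem error_value_formula {K : Type*} [Field K] [Fintype K] [CharP K 2]
    (E : Finset K) (u r q : Polynomial K)
    (heq : (u + r) * (∏ a ∈ E, (X - C a)) = q * ∏ a : K, (X - C a)) :
    ∀ a ∈ E,
      (Polynomial.derivative (∏ b ∈ E, (X - C b))).eval a ≠ 0 ∧
      (u.eval a + r.eval a) * (Polynomial.derivative (∏ b ∈ E, (X - C b))).eval a
        = q.eval a ∧
      u.eval a + r.eval a
        = q.eval a / (Polynomial.derivative (∏ b ∈ E, (X - C b))).eval a := by
  simpa only [eval_add, CharTwo.neg_eq] using error_value_formula_general E (u + r) q heq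
end
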